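/- Let G be a finitely generated group and A a finitely generated undistorted subgroup of G. If H is a strongly quasiconvex subgroup of G, then H ∩ A is a strongly quasiconvex subgroup of A; in particular, H ∩ A is finitely generated and undistorted in A. -/

import Mathlib

/-! A quasi-geodesic in a Cayley graph of `A` with end points in `H ∩ A` is moved to nearby
vertices and, `A` being undistorted, becomes a quasi-geodesic in a Cayley graph of `G` with end
points in `H`. It therefore stays close to `H`. Since it consists of elements of `A`, and since
elements of `A` close to `H` are close to `H ∩ A` (`exists_near_inter`, from finiteness of
balls in `G`), it stays close to `H ∩ A`; this is `stronglyQuasiconvex_inter`.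

Moreover, if geodesics between points of a subgroup `B` stay at distance at most `M` from `B`,
then replacing the points of a geodesic at integer times by nearby elements of `B` writes each
`b ∈ B` as a product of `|b|` elements of `B` of bounded length. These finitely many elements
generate `B`, with word length comparable to that of the ambient group
(`undistorted_of_stronglyQuasiconvex`).

Both arguments need a Cayley graph to exist as a geodesic metric space. It is built
(`exists_realization`, `exists_cayleyModel`) by gluing an interval for each oriented edge, with
the path pseudometric written explicitly (along an edge, or as a minimum over its end points), and
identifying points at distance zero. -/

open Metric Set Pointwise
open scoped ENNReal

noncomputable section

/-- The `(K,C)`-quasi-isometric-embedding inequalities for a map `γ : ℝ → X`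
restricted to a subset `s ⊆ ℝ`; for `s` an interval this is the notion of a
`(K,C)`-quasi-geodesic. -/
def QIEmbedOn {X : Type*} [MetricSpace X] (γ : ℝ → X) (s : Set ℝ) (K C : ℝ) : Prop :=
  ∀ a ∈ s, ∀ b ∈ s,
    (1 / K) * |a - b| - C ≤ dist (γ a) (γ b) ∧ dist (γ a) (γ b) ≤ K * |a - b| + C

/-- `Φ` is a `(K,L)`-quasi-isometric embedding. -/
def QIEmbeddingWith {A X : Type*} [MetricSpace A] [MetricSpace X] (Φ : A → X)
    (K L : ℝ) : Prop :=
  1 ≤ K ∧ 0 ≤ L ∧ ∀ a b : A,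
    (1 / K) * dist a b - L ≤ dist (Φ a) (Φ b) ∧ dist (Φ a) (Φ b) ≤ K * dist a b + L

/-- `Φ` is a quasi-isometric embedding. -/
def IsQIEmbedding {A X : Type*} [MetricSpace A] [MetricSpace X] (Φ : A → X) : Prop :=
  ∃ K L : ℝ, QIEmbeddingWith Φ K L

/-- A metric space is geodesic if every pair of points is joined by an isometrically
parametrized segment. -/
def IsGeodesicSpace (X : Type*) [MetricSpace X] : Prop :=
  ∀ x y : X, ∃ γ : ℝ → X, γ 0 = x ∧ γ (dist x y) = y ∧
    ∀ s ∈ Icc (0 : ℝ) (dist x y), ∀ t ∈ Icc (0 : ℝ) (dist x y), dist (γ s) (γ t) = |s - t|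

/-- A subset `A` is Morse: every `(K,C)`-quasi-geodesic with endpoints on `A` stays in a
uniform `M = M(K,C)` neighborhood of `A`. -/
def IsMorse {X : Type*} [MetricSpace X] (A : Set X) : Prop :=
  ∀ K C : ℝ, 1 ≤ K → 0 ≤ C → ∃ M : ℝ, 0 ≤ M ∧
    ∀ (γ : ℝ → X) (a b : ℝ), a ≤ b → QIEmbedOn γ (Icc a b) K C →
      γ a ∈ A → γ b ∈ A → ∀ t ∈ Icc a b, infDist (γ t) A ≤ M

/-- `A` is Morse with the specific Morse gauge `N`. -/
def MorseWithGauge {X : Type*} [MetricSpace X] (A : Set X) (N : ℝ → ℝ → ℝ) : Prop :=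
  ∀ K C : ℝ, 1 ≤ K → 0 ≤ C →
    ∀ (γ : ℝ → X) (a b : ℝ), a ≤ b → QIEmbedOn γ (Icc a b) K C →
      γ a ∈ A → γ b ∈ A → ∀ t ∈ Icc a b, infDist (γ t) A ≤ N K C

/-- A subset `A ⊆ X` is stable: any two `(K,L)`-quasi-geodesics with the same endpoints
on `A` are at uniformly bounded Hausdorff distance `R = R(K,L)`. -/
def IsStableSubset {X : Type*} [MetricSpace X] (A : Set X) : Prop :=
  ∀ K L : ℝ, 1 ≤ K → 0 ≤ L → ∃ R : ℝ, 0 ≤ R ∧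
    ∀ (γ γ' : ℝ → X) (a b a' b' : ℝ), a ≤ b → a' ≤ b' →
      QIEmbedOn γ (Icc a b) K L → QIEmbedOn γ' (Icc a' b') K L →
      γ a = γ' a' → γ b = γ' b' → γ a ∈ A → γ b ∈ A →
      hausdorffDist (γ '' Icc a b) (γ' '' Icc a' b') < R

/-- `s` is (the image of) a geodesic segment from `x` to `y`. -/
def IsGeodesicSegment {X : Type*} [MetricSpace X] (s : Set X) (x y : X) : Prop :=
  ∃ γ : ℝ → X, γ 0 = x ∧ γ (dist x y) = y ∧ s = γ '' Icc 0 (dist x y) ∧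
    ∀ u ∈ Icc (0 : ℝ) (dist x y), ∀ v ∈ Icc (0 : ℝ) (dist x y), dist (γ u) (γ v) = |u - v|

/-- `X` is (Gromov) hyperbolic: there is `δ ≥ 0` such that every geodesic triangle is
`δ`-thin (each side lies in the `δ`-neighborhood of the union of the other two sides). -/
def IsHyperbolic (X : Type*) [MetricSpace X] : Prop :=
  ∃ δ : ℝ, 0 ≤ δ ∧ ∀ x y z : X, ∀ s₁ s₂ s₃ : Set X,
    IsGeodesicSegment s₁ x y → IsGeodesicSegment s₂ y z → IsGeodesicSegment s₃ x z →
    ∀ p ∈ s₃, infDist p (s₁ ∪ s₂) ≤ δ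

/-- The induced length (pseudo)distance `d_r(x,y)` on the complement of the open
`r`-neighborhood of `A`: the infimum of lengths of paths from `x` to `y` staying at
distance at least `r` from `A` (with value `∞` if there is no such path). -/
def relPathDist {X : Type*} [MetricSpace X] (A : Set X) (r : ℝ) (x y : X) : ℝ≥0∞ :=
  ⨅ (γ : ℝ → X) (a : ℝ) (b : ℝ) (_ : a ≤ b) (_ : ContinuousOn γ (Icc a b))
    (_ : γ a = x) (_ : γ b = y) (_ : ∀ t ∈ Icc a b, r ≤ infDist (γ t) A),
    eVariationOn γ (Icc a b)

/-- The lower relative divergence `σ^n_ρ(r)` of `X` with respect to `A`: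
the infimum of `d_{ρr}(x,y)` over `x, y ∈ ∂N_r(A)` with `d_r(x,y) < ∞` and
`d(x,y) ≥ n r` (and `∞` if there is no such pair). -/
def lowerRelDiv {X : Type*} [MetricSpace X] (A : Set X) (n : ℕ) (ρ r : ℝ) : ℝ≥0∞ :=
  ⨅ (x : X) (y : X) (_ : infDist x A = r) (_ : infDist y A = r)
    (_ : relPathDist A r x y ≠ ⊤) (_ : (n : ℝ) * r ≤ dist x y),
    relPathDist A (ρ * r) x y

/-- `f : [0,∞) → [0,∞]` is completely super linear: for each `C > 0` the set of `x ≥ 0`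
with `f x ≤ C x` is bounded. -/
def CompletelySuperLinear (f : ℝ → ℝ≥0∞) : Prop :=
  ∀ C : ℝ, 0 < C → ∃ B : ℝ, ∀ x : ℝ, 0 ≤ x → f x ≤ ENNReal.ofReal (C * x) → x ≤ B

/-- A family `{σ^n_ρ}` is completely super linear if there is `n₀ ≥ 3` such that
`σ^{n₀}_ρ` is completely super linear for every `ρ ∈ (0,1]`. -/
def FamilyCSL (σ : ℕ → ℝ → ℝ → ℝ≥0∞) : Prop :=
  ∃ n₀ : ℕ, 3 ≤ n₀ ∧ ∀ ρ : ℝ, 0 < ρ → ρ ≤ 1 → CompletelySuperLinear (σ n₀ ρ)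

/-- `f` is dominated by `g` : `f(x) ≤ A g(Bx) + Cx` for all `x > D`. -/
def FunDominatedBy (f g : ℝ → ℝ≥0∞) : Prop :=
  ∃ A B C D : ℝ, 0 < A ∧ 0 < B ∧ 0 < C ∧ 0 < D ∧
    ∀ x : ℝ, D < x → f x ≤ ENNReal.ofReal A * g (B * x) + ENNReal.ofReal (C * x)

/-- The quadratic function `r ↦ r²` viewed in `[0,∞]`. -/
def quadFun : ℝ → ℝ≥0∞ := fun r => ENNReal.ofReal (r ^ 2)

/-- The family `{σ^n_ρ}` dominates the function `f` (i.e. the constant family `f` is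
dominated by `{σ^n_ρ}`): there are `L ∈ (0,1]` and a positive integer `M` such that
`f ≼ σ^{Mn}_ρ` for all `n ≥ 2`, `ρ ∈ (0,1]`. -/
def FamilyDominatesFun (σ : ℕ → ℝ → ℝ → ℝ≥0∞) (f : ℝ → ℝ≥0∞) : Prop :=
  ∃ (L : ℝ) (M : ℕ), 0 < L ∧ L ≤ 1 ∧ 0 < M ∧
    ∀ n : ℕ, 2 ≤ n → ∀ ρ : ℝ, 0 < ρ → ρ ≤ 1 → FunDominatedBy f (σ (M * n) ρ)

/-- The family `{σ^n_ρ}` is dominated by the function `f`: there are `L ∈ (0,1]` and a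
positive integer `M` such that `σ^n_{Lρ} ≼ f` for all `n ≥ 2`, `ρ ∈ (0,1]`. -/
def FamilyDominatedByFun (σ : ℕ → ℝ → ℝ → ℝ≥0∞) (f : ℝ → ℝ≥0∞) : Prop :=
  ∃ (L : ℝ) (M : ℕ), 0 < L ∧ L ≤ 1 ∧ 0 < M ∧
    ∀ n : ℕ, 2 ≤ n → ∀ ρ : ℝ, 0 < ρ → ρ ≤ 1 → FunDominatedBy (σ n (L * ρ)) f

/-- The family is at least quadratic. -/
def FamilyAtLeastQuadratic (σ : ℕ → ℝ → ℝ → ℝ≥0∞) : Prop :=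
  FamilyDominatesFun σ quadFun

/-- The family is (exactly) quadratic. -/
def FamilyQuadratic (σ : ℕ → ℝ → ℝ → ℝ≥0∞) : Prop :=
  FamilyDominatesFun σ quadFun ∧ FamilyDominatedByFun σ quadFun

/-- Word length of `g` with respect to a generating set `S` (letters from `S ∪ S⁻¹`). -/
def wordLength {G : Type*} [Group G] (S : Set G) (g : G) : ℕ :=
  sInf {n : ℕ | ∃ w : List G, w.length = n ∧ (∀ x ∈ w, x ∈ S ∨ x⁻¹ ∈ S) ∧ w.prod = g}

/-- The word metric on `G` with respect to `S`. -/
def wordDist {G : Type*} [Group G] (S : Set G) (g h : G) : ℝ :=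
  (wordLength S (g⁻¹ * h) : ℝ)

/-- The distance `d_S(g, A)` from `g` to a subset `A ⊆ G` in the word metric. -/
def wordDistToSet {G : Type*} [Group G] (S : Set G) (g : G) (A : Set G) : ℕ :=
  sInf {n : ℕ | ∃ a ∈ A, wordLength S (g⁻¹ * a) = n}

/-- `X`, together with the vertex map `ι : G → X`, is a geometric model for the Cayley
graph `Γ(G,S)`: `X` is geodesic, `ι` realizes the word metric on the vertex set, and every
point of `X` is within `1/2` of a vertex (as in the unit-edge-length Cayley graph). -/
def CayleyModel (G : Type*) [Group G] (S : Set G) (X : Type*) [MetricSpace X]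
    (ι : G → X) : Prop :=
  IsGeodesicSpace X ∧ (∀ g h : G, dist (ι g) (ι h) = wordDist S g h) ∧
    ∀ x : X, ∃ g : G, dist x (ι g) ≤ 1 / 2

/-- `H ≤ G` is strongly quasiconvex: `H` is a Morse subset of the Cayley graph of `G`
with respect to some (equivalently, any) finite generating set. -/
def StronglyQuasiconvex {G : Type*} [Group G] (H : Subgroup G) : Prop :=
  ∀ S : Set G, S.Finite → Subgroup.closure S = ⊤ →
    ∀ (X : Type) [MetricSpace X], ∀ ι : G → X, CayleyModel G S X ι →
      IsMorse (ι '' (H : Set G))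

/-- `H` is a finitely generated undistorted subgroup of `G` (with respect to the word
metric of the finite generating set `S` of `G`): the inclusion `(H,d_T) → (G,d_S)` is a
quasi-isometric embedding for some finite generating set `T` of `H`. -/
def Undistorted {G : Type*} [Group G] (S : Set G) (H : Subgroup G) : Prop :=
  ∃ T : Set H, T.Finite ∧ Subgroup.closure T = ⊤ ∧
    ∃ K L : ℝ, 1 ≤ K ∧ 0 ≤ L ∧ ∀ h₁ h₂ : H,
      (1 / K) * wordDist T h₁ h₂ - L ≤ wordDist S (h₁ : G) (h₂ : G) ∧
      wordDist S (h₁ : G) (h₂ : G) ≤ K * wordDist T h₁ h₂ + L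

/-- `H` is a stable subgroup of `G`: `H` is finitely generated and undistorted, and its
image in (a model `X` of) the Cayley graph `Γ(G,S)` is a stable subset. -/
def StableIn {G : Type*} [Group G] (S : Set G) (H : Subgroup G) (X : Type*)
    [MetricSpace X] (ι : G → X) : Prop :=
  Undistorted S H ∧ IsStableSubset (ι '' (H : Set G))

/-- A group is hyperbolic if its Cayley graph with respect to some (equivalently, any)
finite generating set is a hyperbolic geodesic space. -/
def IsHyperbolicGroup (H : Type*) [Group H] : Prop :=
  ∀ T : Set H, T.Finite → Subgroup.closure T = ⊤ →
    ∀ (Y : Type) [MetricSpace Y], ∀ ι : H → Y, CayleyModel H T Y ι → IsHyperbolic Y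

/-- A geodesic ray in `X` (isometric embedding of `[0,∞)`). -/
def IsGeodesicRay {X : Type*} [MetricSpace X] (γ : ℝ → X) : Prop :=
  ∀ s ∈ Ici (0 : ℝ), ∀ t ∈ Ici (0 : ℝ), dist (γ s) (γ t) = |s - t|

/-- `γ` restricted to `[a,b]` is a geodesic (isometric parametrization). -/
def IsGeodesicOn {X : Type*} [MetricSpace X] (γ : ℝ → X) (a b : ℝ) : Prop :=
  ∀ s ∈ Icc a b, ∀ t ∈ Icc a b, dist (γ s) (γ t) = |s - t|

/-- `γ` is parametrized by arc length on `[a,b]`. -/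
def ArcLengthParamOn {X : Type*} [MetricSpace X] (γ : ℝ → X) (a b : ℝ) : Prop :=
  ∀ s t : ℝ, a ≤ s → s ≤ t → t ≤ b → eVariationOn γ (Icc s t) = ENNReal.ofReal (t - s)

/-- Relations of a right-angled Coxeter group on a simplicial graph `Γ`. -/
def racgRels {V : Type} (Γ : SimpleGraph V) : Set (FreeGroup V) :=
  {rel | (∃ v : V, rel = FreeGroup.of v * FreeGroup.of v) ∨
    (∃ v w : V, Γ.Adj v w ∧
      rel = FreeGroup.of v * FreeGroup.of w * (FreeGroup.of v)⁻¹ * (FreeGroup.of w)⁻¹)}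

/-- The right-angled Coxeter group associated to a finite simplicial graph `Γ`. -/
abbrev RACG {V : Type} (Γ : SimpleGraph V) : Type := PresentedGroup (racgRels Γ)

/-- The standard generator of `RACG Γ` corresponding to a vertex. -/
def racgGen {V : Type} (Γ : SimpleGraph V) (v : V) : RACG Γ := PresentedGroup.of v

/-- Relations of a right-angled Artin group on a simplicial graph `Γ`. -/
def raagRels {V : Type} (Γ : SimpleGraph V) : Set (FreeGroup V) :=
  {rel | ∃ v w : V, Γ.Adj v w ∧
    rel = FreeGroup.of v * FreeGroup.of w * (FreeGroup.of v)⁻¹ * (FreeGroup.of w)⁻¹}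

/-- The right-angled Artin group associated to a finite simplicial graph `Γ`. -/
abbrev RAAG {V : Type} (Γ : SimpleGraph V) : Type := PresentedGroup (raagRels Γ)

/-- The standard generator of `RAAG Γ` corresponding to a vertex. -/
def raagGen {V : Type} (Γ : SimpleGraph V) (v : V) : RAAG Γ := PresentedGroup.of v

/-- `a b c d` (in this cyclic order) form an induced `4`-cycle of `Γ`. -/
def InducedFourCycle {V : Type} (Γ : SimpleGraph V) (a b c d : V) : Prop :=
  a ≠ b ∧ a ≠ c ∧ a ≠ d ∧ b ≠ c ∧ b ≠ d ∧ c ≠ d ∧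
  Γ.Adj a b ∧ Γ.Adj b c ∧ Γ.Adj c d ∧ Γ.Adj d a ∧ ¬ Γ.Adj a c ∧ ¬ Γ.Adj b d

/-! ### Word length -/

section WordLength

variable {G : Type*} [Group G] {S : Set G}

theorem wordLength_prod_le (w : List G) (hw : ∀ x ∈ w, x ∈ S ∨ x⁻¹ ∈ S) :
    wordLength S w.prod ≤ w.length :=
  Nat.sInf_le ⟨w, rfl, hw, rfl⟩

theorem exists_word (hS : Subgroup.closure S = ⊤) (g : G) :
    ∃ w : List G, w.length = wordLength S g ∧ (∀ x ∈ w, x ∈ S ∨ x⁻¹ ∈ S) ∧ w.prod = g := by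
  have hg : g ∈ Subgroup.closure S := hS ▸ Subgroup.mem_top g
  rw [← Subgroup.mem_toSubmonoid, Subgroup.closure_toSubmonoid] at hg
  obtain ⟨l, hl, hp⟩ := Submonoid.exists_list_of_mem_closure hg
  exact Nat.sInf_mem (s := {n : ℕ | ∃ w : List G, w.length = n ∧
    (∀ x ∈ w, x ∈ S ∨ x⁻¹ ∈ S) ∧ w.prod = g}) ⟨l.length, l, rfl, hl, hp⟩

theorem wordLength_one : wordLength S (1 : G) = 0 := by
  simpa using wordLength_prod_le (S := S) [] (by simp)

theorem wordLength_mul_le (hS : Subgroup.closure S = ⊤) (g h : G) :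
    wordLength S (g * h) ≤ wordLength S g + wordLength S h := by
  obtain ⟨v, hv, hv', rfl⟩ := exists_word hS g
  obtain ⟨w, hw, hw', rfl⟩ := exists_word hS h
  rw [← hv, ← hw, ← List.length_append, ← List.prod_append]
  apply wordLength_prod_le
  intro x hx
  rcases List.mem_append.1 hx with h | h
  exacts [hv' x h, hw' x h]

theorem wordLength_inv_le (hS : Subgroup.closure S = ⊤) (g : G) :
    wordLength S g⁻¹ ≤ wordLength S g := by
  obtain ⟨v, hv, hv', rfl⟩ := exists_word hS g
  rw [← hv, List.prod_inv_reverse]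
  refine (wordLength_prod_le _ ?_).trans (by simp)
  intro x hx
  simp only [List.mem_reverse, List.mem_map] at hx
  obtain ⟨y, hy, rfl⟩ := hx
  rw [inv_inv]
  exact (hv' y hy).symm

theorem wordLength_inv (hS : Subgroup.closure S = ⊤) (g : G) :
    wordLength S g⁻¹ = wordLength S g :=
  le_antisymm (wordLength_inv_le hS g) (by simpa using wordLength_inv_le hS g⁻¹)

theorem exists_first_letter (hS : Subgroup.closure S = ⊤) {g : G} {n : ℕ}
    (hg : wordLength S g = n + 1) :
    ∃ s h : G, (s ∈ S ∨ s⁻¹ ∈ S) ∧ g = s * h ∧ wordLength S s ≤ 1 ∧ wordLength S h ≤ n := by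
  obtain ⟨w, hw, hw', rfl⟩ := exists_word hS g
  rw [hg] at hw
  match w, hw, hw' with
  | s :: v, hw, hw' =>
    have hs := hw' s (by simp)
    refine ⟨s, v.prod, hs, by simp, ?_, ?_⟩
    · simpa using wordLength_prod_le (S := S) [s] (by simpa using hs)
    · refine (wordLength_prod_le v fun x hx => hw' x (by simp [hx])).trans ?_
      simpa using hw.le

theorem finite_ball (hfin : S.Finite) (hS : Subgroup.closure S = ⊤) (n : ℕ) :
    {g : G | wordLength S g ≤ n}.Finite := by
  induction n with
  | zero =>
    refine (finite_singleton (1 : G)).subset fun g hg => ?_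
    obtain ⟨w, hw, -, rfl⟩ := exists_word hS g
    have : w = [] := List.length_eq_zero_iff.1 (hw.trans (Nat.le_zero.1 hg))
    simp [this]
  | succ n ih =>
    refine (ih.union ((hfin.union hfin.inv).mul ih)).subset fun g hg => ?_
    rcases Nat.le_succ_iff.1 hg with h | h
    · exact Or.inl h
    · obtain ⟨s, y, hs, rfl, -, hy⟩ := exists_first_letter hS h
      exact Or.inr (Set.mul_mem_mul (by simpa using hs) hy)

theorem countable_of_generated (hfin : S.Finite) (hS : Subgroup.closure S = ⊤) :
    Countable G := by
  have : (univ : Set G) = ⋃ n : ℕ, {g : G | wordLength S g ≤ n} := by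
    ext g; simpa using ⟨_, le_refl (wordLength S g)⟩
  rw [← Set.countable_univ_iff, this]
  exact Set.countable_iUnion fun n => (finite_ball hfin hS n).countable

theorem wordLength_map_le {G' : Type*} [Group G'] {S' : Set G'}
    (hS : Subgroup.closure S = ⊤) (hS' : Subgroup.closure S' = ⊤) (f : G →* G') (K : ℕ)
    (hK : ∀ s ∈ S, wordLength S' (f s) ≤ K) (g : G) :
    wordLength S' (f g) ≤ K * wordLength S g := by
  obtain ⟨w, hw, hw', rfl⟩ := exists_word hS g
  rw [← hw]
  clear hw
  induction w with
  | nil => simp [wordLength_one]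
  | cons s v ih =>
    have h1 : wordLength S' (f s) ≤ K := by
      rcases hw' s (by simp) with h | h
      · exact hK s h
      · have := hK _ h
        rwa [map_inv, wordLength_inv hS'] at this
    have h2 := ih fun x hx => hw' x (by simp [hx])
    have h3 := wordLength_mul_le hS' (f s) (f v.prod)
    rw [List.prod_cons, map_mul, List.length_cons, Nat.mul_succ]
    omega

/-- Homomorphisms from a finitely generated group are Lipschitz for word metrics. -/
theorem exists_wordLength_map_le {G' : Type*} [Group G'] {S' : Set G'} (hfin : S.Finite)
    (hS : Subgroup.closure S = ⊤) (hS' : Subgroup.closure S' = ⊤) (f : G →* G') :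
    ∃ K : ℕ, ∀ g, wordLength S' (f g) ≤ K * wordLength S g := by
  obtain ⟨K, hK⟩ := (hfin.image fun s => wordLength S' (f s)).bddAbove
  exact ⟨K, wordLength_map_le hS hS' f K fun s hs => hK ⟨s, hs, rfl⟩⟩

theorem exists_wordDist_map_le {G' : Type*} [Group G'] {S' : Set G'} (hfin : S.Finite)
    (hS : Subgroup.closure S = ⊤) (hS' : Subgroup.closure S' = ⊤) (f : G →* G') :
    ∃ K : ℝ, 0 ≤ K ∧ ∀ g h, wordDist S' (f g) (f h) ≤ K * wordDist S g h := by
  obtain ⟨K, hK⟩ := exists_wordLength_map_le hfin hS hS' f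
  refine ⟨K, by positivity, fun g h => ?_⟩
  have := hK (g⁻¹ * h)
  rw [map_mul, map_inv] at this
  unfold wordDist
  exact_mod_cast this

end WordLength

/-! ### Concatenating geodesics -/

section Geodesics

variable {X : Type*} [MetricSpace X]

/-- The points `x` and `y` are joined by an isometrically parametrized segment. -/
def SegJoined (x y : X) : Prop :=
  ∃ γ : ℝ → X, γ 0 = x ∧ γ (dist x y) = y ∧
    ∀ s ∈ Icc (0 : ℝ) (dist x y), ∀ t ∈ Icc (0 : ℝ) (dist x y), dist (γ s) (γ t) = |s - t|

theorem SegJoined.refl (x : X) : SegJoined x x := by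
  refine ⟨fun _ => x, rfl, rfl, fun s hs t ht => ?_⟩
  simp only [dist_self, Icc_self, mem_singleton_iff] at hs ht
  simp [hs, ht]

theorem SegJoined.symm {x y : X} (h : SegJoined x y) : SegJoined y x := by
  obtain ⟨γ, h0, h1, h⟩ := h
  refine ⟨fun s => γ (dist x y - s), by simpa using h1, by simp [dist_comm y x, h0], ?_⟩
  intro s hs t ht
  rw [dist_comm y x] at hs ht
  rw [h _ ⟨by linarith [hs.2], by linarith [hs.1]⟩ _ ⟨by linarith [ht.2], by linarith [ht.1]⟩,
    abs_sub_comm s t]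
  congr 1
  ring

theorem SegJoined.trans {x y z : X} (h₁ : SegJoined x y) (h₂ : SegJoined y z)
    (hd : dist x z = dist x y + dist y z) : SegJoined x z := by
  obtain ⟨γ, h0, h1, hγ⟩ := h₁
  obtain ⟨δ, k0, k1, hδ⟩ := h₂
  have hxy : 0 ≤ dist x y := dist_nonneg
  have hyz : 0 ≤ dist y z := dist_nonneg
  set σ : ℝ → X := fun s => if s ≤ dist x y then γ s else δ (s - dist x y) with hσ
  have σ1 : ∀ s, s ≤ dist x y → σ s = γ s := fun s hs => by simp [hσ, hs]
  have σ2 : ∀ s, dist x y ≤ s → σ s = δ (s - dist x y) := by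
    intro s hs
    rcases hs.eq_or_lt with rfl | h
    · simp [hσ, h1, k0]
    · simp [hσ, h]
  have e0 : σ 0 = x := by rw [σ1 0 hxy, h0]
  have e1 : σ (dist x z) = z := by rw [σ2 _ (by linarith), hd, add_sub_cancel_left, k1]
  have em : σ (dist x y) = y := by rw [σ1 _ le_rfl, h1]
  have m1 : ∀ s ∈ Icc 0 (dist x y), ∀ t ∈ Icc 0 (dist x y), dist (σ s) (σ t) = |s - t| := by
    intro s hs t ht
    rw [σ1 s hs.2, σ1 t ht.2, hγ s hs t ht]
  have m2 : ∀ s ∈ Icc (dist x y) (dist x z), ∀ t ∈ Icc (dist x y) (dist x z),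
      dist (σ s) (σ t) = |s - t| := by
    intro s hs t ht
    rw [σ2 s hs.1, σ2 t ht.1, hδ _ ⟨by linarith [hs.1], by linarith [hs.2]⟩ _
      ⟨by linarith [ht.1], by linarith [ht.2]⟩]
    congr 1
    ring
  -- On opposite sides of `y`, additivity of the total distance leaves no room for a shortcut.
  have mixed : ∀ s ∈ Icc 0 (dist x y), ∀ t ∈ Icc (dist x y) (dist x z),
      dist (σ s) (σ t) = |s - t| := by
    intro s hs t ht
    have a1 := m1 0 ⟨le_rfl, hxy⟩ s hs
    have a2 := m1 s hs _ ⟨hxy, le_rfl⟩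
    have a3 := m2 _ ⟨le_rfl, by linarith⟩ t ht
    have a4 := m2 t ht (dist x z) ⟨by linarith, le_rfl⟩
    have b1 := dist_triangle4 (σ 0) (σ s) (σ t) (σ (dist x z))
    have b2 := dist_triangle (σ s) (σ (dist x y)) (σ t)
    rw [abs_of_nonpos (by linarith [hs.1])] at a1
    rw [abs_of_nonpos (by linarith [hs.2])] at a2
    rw [abs_of_nonpos (by linarith [ht.1])] at a3
    rw [abs_of_nonpos (by linarith [ht.2])] at a4
    rw [abs_of_nonpos (by linarith [hs.2, ht.1])]
    have b3 : dist (σ 0) (σ (dist x z)) = dist x z := by rw [e0, e1]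
    linarith
  refine ⟨σ, e0, e1, fun s hs t ht => ?_⟩
  rcases le_total s (dist x y) with h | h <;> rcases le_total t (dist x y) with h' | h'
  · exact m1 s ⟨hs.1, h⟩ t ⟨ht.1, h'⟩
  · exact mixed s ⟨hs.1, h⟩ t ⟨h', ht.2⟩
  · rw [dist_comm, abs_sub_comm]
    exact mixed t ⟨ht.1, h'⟩ s ⟨h, hs.2⟩
  · exact m2 s ⟨h, hs.2⟩ t ⟨h', ht.2⟩

end Geodesics

/-! ### Geometric realization of a graph metric -/

section Realization

variable {V : Type}

/-- `d` is the path metric of a connected graph on `V`, possibly with distinct vertices at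
distance zero: `step` says that distances are realized by edge paths. -/
structure IsGraphDist (d : V → V → ℕ) : Prop where
  self : ∀ x, d x x = 0
  comm : ∀ x y, d x y = d y x
  tri : ∀ x y z, d x z ≤ d x y + d y z
  step : ∀ x y n, d x y = n + 1 → ∃ z, d x z ≤ 1 ∧ d z y ≤ n

/-- A point of the realization, before identifying points at distance zero: a point at
distance `pos` from `src` on an oriented edge of length `d src tgt ≤ 1`. An edge and its reverse
are not identified, so that adjacent vertices are joined by two edges; the edges of length zero
supply the vertices. -/
structure EdgePoint (d : V → V → ℕ) where
  src : V
  tgt : V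
  pos : ℝ
  len_le : d src tgt ≤ 1
  pos_nonneg : 0 ≤ pos
  pos_le : pos ≤ d src tgt

namespace EdgePoint

variable {d : V → V → ℕ}

/-- The distance from a point of an edge to a vertex. -/
def toV (p : EdgePoint d) (z : V) : ℝ :=
  min (p.pos + d p.src z) (d p.src p.tgt - p.pos + d p.tgt z)

/-- The length of a shortest path between two points that leaves the edge of `p` through one
of its end points. -/
def via (p q : EdgePoint d) : ℝ :=
  min (p.pos + q.toV p.src) (d p.src p.tgt - p.pos + q.toV p.tgt)

/-- The two points lie on the same oriented edge. -/
def SameEdge (p q : EdgePoint d) : Prop := p.src = q.src ∧ p.tgt = q.tgt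

open Classical in
/-- The path distance between two points. -/
def pathDist (p q : EdgePoint d) : ℝ :=
  if p.SameEdge q then |p.pos - q.pos| else via p q

/-- A vertex, as the only point of an edge of length zero. -/
def vert (hd : IsGraphDist d) (v : V) : EdgePoint d :=
  ⟨v, v, 0, by simp [hd.self], le_rfl, by positivity⟩

theorem toV_nonneg (p : EdgePoint d) (z : V) : 0 ≤ p.toV z := by
  have := p.pos_nonneg
  have := p.pos_le
  exact le_min (by positivity) (by have : (0 : ℝ) ≤ d p.tgt z := by positivity
                                   linarith)

theorem triR (hd : IsGraphDist d) (x y z : V) : (d x z : ℝ) ≤ d x y + d y z := by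
  exact_mod_cast hd.tri x y z

theorem toV_lip (hd : IsGraphDist d) (p : EdgePoint d) (z w : V) :
    p.toV z ≤ p.toV w + d w z := by
  have h1 := triR hd p.src w z
  have h2 := triR hd p.tgt w z
  unfold toV
  rw [← min_add_add_right]
  exact min_le_min (by linarith) (by linarith)

theorem dist_le_toV (hd : IsGraphDist d) (p : EdgePoint d) (z w : V) :
    (d z w : ℝ) ≤ p.toV z + p.toV w := by
  have h1 := triR hd z p.src w
  have h2 := triR hd z p.tgt w
  have h3 := triR hd p.src p.tgt w
  have h4 := triR hd p.tgt p.src w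
  rw [hd.comm z p.src] at h1
  rw [hd.comm z p.tgt] at h2
  rw [hd.comm p.tgt p.src] at h4
  have := p.pos_nonneg
  have := p.pos_le
  unfold toV
  rcases min_cases (p.pos + (d p.src z : ℝ)) (d p.src p.tgt - p.pos + d p.tgt z) with h | h <;>
  rcases min_cases (p.pos + (d p.src w : ℝ)) (d p.src p.tgt - p.pos + d p.tgt w) with h' | h' <;>
  rw [h.1, h'.1] <;> linarith

theorem toV_src (hd : IsGraphDist d) (p : EdgePoint d) : p.toV p.src = p.pos := by
  have := p.pos_le
  simp only [toV, hd.self, hd.comm p.tgt p.src, Nat.cast_zero, add_zero]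
  exact min_eq_left (by linarith)

theorem toV_tgt (hd : IsGraphDist d) (p : EdgePoint d) :
    p.toV p.tgt = d p.src p.tgt - p.pos := by
  have := p.pos_nonneg
  simp only [toV, hd.self, Nat.cast_zero, add_zero]
  exact min_eq_right (by linarith)

theorem toV_vert (hd : IsGraphDist d) (v z : V) : (vert hd v).toV z = d v z := by
  simp [toV, vert, hd.self]

theorem toV_eq (hd : IsGraphDist d) (p : EdgePoint d) (z : V) :
    ∃ e, (e = p.src ∨ e = p.tgt) ∧ p.toV z = p.toV e + d e z := by
  rcases min_choice (p.pos + (d p.src z : ℝ)) (d p.src p.tgt - p.pos + d p.tgt z) with h | h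
  · exact ⟨p.src, Or.inl rfl, by rw [toV_src hd]; exact h⟩
  · exact ⟨p.tgt, Or.inr rfl, by rw [toV_tgt hd]; exact h⟩

theorem via_eq (hd : IsGraphDist d) (p q : EdgePoint d) :
    ∃ e, (e = p.src ∨ e = p.tgt) ∧ via p q = p.toV e + q.toV e := by
  rcases min_choice (p.pos + q.toV p.src) (d p.src p.tgt - p.pos + q.toV p.tgt) with h | h
  · exact ⟨p.src, Or.inl rfl, by rw [toV_src hd]; exact h⟩
  · exact ⟨p.tgt, Or.inr rfl, by rw [toV_tgt hd]; exact h⟩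

theorem via_le (hd : IsGraphDist d) (p q : EdgePoint d) (z : V) :
    via p q ≤ p.toV z + q.toV z := by
  obtain ⟨e, he, h⟩ := toV_eq hd p z
  have h1 := toV_lip hd q e z
  have h2 : via p q ≤ p.toV e + q.toV e := by
    rcases he with rfl | rfl
    · rw [toV_src hd]; exact min_le_left _ _
    · rw [toV_tgt hd]; exact min_le_right _ _
  rw [hd.comm z e] at h1
  linarith

theorem via_comm (hd : IsGraphDist d) (p q : EdgePoint d) : via p q = via q p := by
  obtain ⟨e, -, h⟩ := via_eq hd p q
  obtain ⟨f, -, k⟩ := via_eq hd q p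
  have h' := via_le hd q p e
  have k' := via_le hd p q f
  linarith

theorem pathDist_same {p q : EdgePoint d} (h : p.SameEdge q) : pathDist p q = |p.pos - q.pos| :=
  if_pos h

theorem pathDist_ne {p q : EdgePoint d} (h : ¬ p.SameEdge q) : pathDist p q = via p q :=
  if_neg h

theorem SameEdge.symm {p q : EdgePoint d} (h : p.SameEdge q) : q.SameEdge p :=
  ⟨h.1.symm, h.2.symm⟩

theorem toV_le_same (p q : EdgePoint d) (h : p.SameEdge q) (z : V) :
    p.toV z ≤ |p.pos - q.pos| + q.toV z := by
  have a1 := le_abs_self (p.pos - q.pos)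
  have a2 := neg_abs_le (p.pos - q.pos)
  unfold toV
  rw [h.1, h.2, add_comm |_|, ← min_add_add_right]
  exact min_le_min (by linarith) (by linarith)

theorem abs_le_via (hd : IsGraphDist d) (p q : EdgePoint d) (h : p.SameEdge q) :
    |p.pos - q.pos| ≤ via p q := by
  have h1 := p.pos_nonneg
  have h2 := p.pos_le
  have h3 := q.pos_nonneg
  have h4 := q.pos_le
  have e1 := toV_src hd q
  have e2 := toV_tgt hd q
  rw [← h.1, ← h.2] at e2
  rw [← h.1, ← h.2] at h4
  rw [← h.1] at e1
  unfold via
  rw [e1, e2]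
  exact le_min (abs_le.2 ⟨by linarith, by linarith⟩) (abs_le.2 ⟨by linarith, by linarith⟩)

theorem pathDist_le_via (hd : IsGraphDist d) (p q : EdgePoint d) : pathDist p q ≤ via p q := by
  by_cases h : p.SameEdge q
  · rw [pathDist_same h]; exact abs_le_via hd p q h
  · rw [pathDist_ne h]

theorem pathDist_comm (hd : IsGraphDist d) (p q : EdgePoint d) : pathDist p q = pathDist q p := by
  by_cases h : p.SameEdge q
  · rw [pathDist_same h, pathDist_same h.symm, abs_sub_comm]
  · rw [pathDist_ne h, pathDist_ne fun k => h k.symm, via_comm hd]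

/-- A path along one edge, or through end points of edges, can be composed with another:
either both stay on the same edge or the composite passes through a vertex. -/
theorem pathDist_triangle (hd : IsGraphDist d) (p q r : EdgePoint d) :
    pathDist p r ≤ pathDist p q + pathDist q r := by
  by_cases h : p.SameEdge q <;> by_cases k : q.SameEdge r
  · rw [pathDist_same h, pathDist_same k, pathDist_same ⟨h.1.trans k.1, h.2.trans k.2⟩]
    exact abs_sub_le _ _ _
  · rw [pathDist_same h, pathDist_ne k]
    obtain ⟨e, -, he⟩ := via_eq hd q r
    have := toV_le_same p q h e
    linarith [pathDist_le_via hd p r, via_le hd p r e]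
  · rw [pathDist_ne h, pathDist_same k]
    obtain ⟨e, -, he⟩ := via_eq hd p q
    have := toV_le_same r q k.symm e
    rw [abs_sub_comm] at this
    linarith [pathDist_le_via hd p r, via_le hd p r e]
  · rw [pathDist_ne h, pathDist_ne k]
    obtain ⟨e, -, he⟩ := via_eq hd p q
    obtain ⟨f, -, hf⟩ := via_eq hd q r
    linarith [pathDist_le_via hd p r, via_le hd p r f, dist_le_toV hd q e f, toV_lip hd p f e]

theorem pathDist_vert (hd : IsGraphDist d) (p : EdgePoint d) (z : V) :
    pathDist p (vert hd z) = p.toV z := by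
  by_cases h : p.SameEdge (vert hd z)
  · have h1 : p.src = z := h.1
    have h2 : p.tgt = z := h.2
    have h3 := p.pos_nonneg
    rw [pathDist_same h, ← h1, toV_src hd]
    simp [vert, abs_of_nonneg h3]
  · rw [pathDist_ne h]
    simp only [via, toV_vert, hd.comm z p.src, hd.comm z p.tgt]
    rfl

/-- The path pseudometric on the points of edges. -/
abbrev pseudoMetric (hd : IsGraphDist d) : PseudoMetricSpace (EdgePoint d) where
  dist := pathDist
  dist_self p := by
    rw [pathDist_same ⟨rfl, rfl⟩]; simp
  dist_comm := pathDist_comm hd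
  dist_triangle := pathDist_triangle hd

end EdgePoint

open EdgePoint in
/-- Every graph metric is induced from a geodesic space in which the vertices are
`1/2`-dense. -/
theorem exists_realization {d : V → V → ℕ} (hd : IsGraphDist d) :
    ∃ (X : Type) (_ : MetricSpace X) (ι : V → X), IsGeodesicSpace X ∧
      (∀ v w, dist (ι v) (ι w) = d v w) ∧ ∀ x : X, ∃ v, dist x (ι v) ≤ 1 / 2 := by
  let _ : PseudoMetricSpace (EdgePoint d) := pseudoMetric hd
  let mk : EdgePoint d → SeparationQuotient (EdgePoint d) := SeparationQuotient.mk
  have dmk : ∀ p q, dist (mk p) (mk q) = pathDist p q := fun p q =>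
    SeparationQuotient.dist_mk p q
  have hmk : ∀ p q, pathDist p q = 0 → mk p = mk q := fun p q h => by
    rw [← dist_eq_zero, dmk, h]
  let ι : V → SeparationQuotient (EdgePoint d) := fun v => mk (vert hd v)
  have dι : ∀ v w, dist (ι v) (ι w) = d v w := fun v w => by
    rw [dmk, pathDist_vert, toV_vert]
  have dpι : ∀ p v, dist (mk p) (ι v) = p.toV v := fun p v => by
    rw [dmk, pathDist_vert]
  have edge_le : ∀ p q : EdgePoint d, p.SameEdge q → p.pos ≤ q.pos →
      SegJoined (mk p) (mk q) := by
    intro p q h hpq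
    have hq : q.pos ≤ d p.src p.tgt := by rw [h.1, h.2]; exact q.pos_le
    have hp := p.pos_nonneg
    have hD : dist (mk p) (mk q) = q.pos - p.pos := by
      rw [dmk, pathDist_same h, abs_of_nonpos (by linarith)]; ring
    -- The position is clamped to the edge so that the path is defined on all of `ℝ`.
    let pt : ℝ → EdgePoint d := fun s => ⟨p.src, p.tgt, max 0 (min (p.pos + s) (d p.src p.tgt)),
      p.len_le, le_max_left _ _, max_le (by positivity) (min_le_right _ _)⟩
    have hpt : ∀ s ∈ Icc 0 (dist (mk p) (mk q)), (pt s).pos = p.pos + s := by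
      intro s hs
      rw [hD] at hs
      change max 0 (min (p.pos + s) (d p.src p.tgt : ℝ)) = p.pos + s
      rw [min_eq_left (by linarith [hs.2]), max_eq_right (by linarith [hs.1])]
    have h0 : (0 : ℝ) ≤ dist (mk p) (mk q) := dist_nonneg
    refine ⟨fun s => mk (pt s), hmk _ _ ?_, hmk _ _ ?_, fun s hs t ht => ?_⟩
    · rw [pathDist_same (p := pt 0) (q := p) ⟨rfl, rfl⟩, hpt 0 ⟨le_rfl, h0⟩]; simp
    · rw [pathDist_same (p := pt _) (q := q) h, hpt _ ⟨h0, le_rfl⟩, hD]; simp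
    · rw [dmk, pathDist_same (p := pt s) (q := pt t) ⟨rfl, rfl⟩, hpt s hs, hpt t ht]
      congr 1; ring
  have edge : ∀ p q : EdgePoint d, p.SameEdge q → SegJoined (mk p) (mk q) := by
    intro p q h
    rcases le_total p.pos q.pos with k | k
    · exact edge_le p q h k
    · exact (edge_le q p h.symm k).symm
  have toEnd : ∀ (p : EdgePoint d) (e : V), (e = p.src ∨ e = p.tgt) →
      SegJoined (mk p) (ι e) := by
    rintro p e (rfl | rfl)
    · let q : EdgePoint d := ⟨p.src, p.tgt, 0, p.len_le, le_rfl, by positivity⟩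
      have : mk q = ι p.src := hmk _ _ (by rw [pathDist_vert]; exact toV_src hd q)
      rw [← this]
      exact edge p q ⟨rfl, rfl⟩
    · let q : EdgePoint d := ⟨p.src, p.tgt, d p.src p.tgt, p.len_le, by positivity, le_rfl⟩
      have : mk q = ι p.tgt :=
        hmk _ _ (by rw [pathDist_vert]; exact (toV_tgt hd q).trans (sub_self _))
      rw [← this]
      exact edge p q ⟨rfl, rfl⟩
  have vv1 : ∀ v w, d v w ≤ 1 → SegJoined (ι v) (ι w) := by
    intro v w h
    let q : EdgePoint d := ⟨v, w, 0, h, le_rfl, by positivity⟩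
    have : mk q = ι v := hmk _ _ (by rw [pathDist_vert]; exact toV_src hd q)
    rw [← this]
    exact toEnd q w (Or.inr rfl)
  have vv : ∀ n v w, d v w = n → SegJoined (ι v) (ι w) := by
    intro n
    induction n with
    | zero => exact fun v w h => vv1 v w (by omega)
    | succ n ih =>
      intro v w h
      obtain ⟨z, h1, h2⟩ := hd.step v w n h
      have h3 := hd.tri v z w
      refine (vv1 v z h1).trans (ih z w (by omega)) ?_
      rw [dι, dι, dι]
      norm_cast
      omega
  have pv : ∀ p v, SegJoined (mk p) (ι v) := by
    intro p v
    obtain ⟨e, he, h⟩ := toV_eq hd p v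
    refine (toEnd p e he).trans (vv _ e v rfl) ?_
    rw [dpι, dpι, dι, h]
  refine ⟨SeparationQuotient (EdgePoint d), inferInstance, ι, ?_, dι, ?_⟩
  · intro x y
    obtain ⟨p, rfl⟩ := SeparationQuotient.surjective_mk x
    obtain ⟨q, rfl⟩ := SeparationQuotient.surjective_mk y
    by_cases h : p.SameEdge q
    · exact edge p q h
    · obtain ⟨e, -, he⟩ := via_eq hd p q
      refine (pv p e).trans (pv q e).symm ?_
      rw [dist_comm (ι e), dpι, dpι]
      change dist (mk p) (mk q) = _
      rw [dmk, pathDist_ne h, he]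
  · intro x
    obtain ⟨p, rfl⟩ := SeparationQuotient.surjective_mk x
    have h1 : (d p.src p.tgt : ℝ) ≤ 1 := by exact_mod_cast p.len_le
    rcases le_total p.pos (1 / 2) with h | h
    · exact ⟨p.src, (dpι p _).le.trans (by rw [toV_src hd]; exact h)⟩
    · exact ⟨p.tgt, (dpι p _).le.trans (by rw [toV_tgt hd]; linarith)⟩

end Realization

/-- Finitely generated groups have Cayley graphs in the lowest universe, as the group is
countable and hence equivalent to a type there. -/
theorem exists_cayleyModel {G : Type*} [Group G] {S : Set G} (hfin : S.Finite)
    (hS : Subgroup.closure S = ⊤) :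
    ∃ (X : Type) (_ : MetricSpace X) (ι : G → X), CayleyModel G S X ι := by
  have : Countable G := countable_of_generated hfin hS
  let e : Shrink.{0} G ≃ G := (equivShrink.{0} G).symm
  have hd : IsGraphDist fun v w => wordLength S ((e v)⁻¹ * e w) := by
    refine ⟨fun x => by simp [wordLength_one], fun x y => ?_, fun x y z => ?_,
      fun x y n h => ?_⟩
    · rw [← wordLength_inv hS]; simp
    · simpa [mul_assoc] using wordLength_mul_le hS ((e x)⁻¹ * e y) ((e y)⁻¹ * e z)
    · obtain ⟨s, k, -, hk, h1, h2⟩ := exists_first_letter hS h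
      refine ⟨e.symm (e x * s), by simpa using h1, ?_⟩
      have : k = s⁻¹ * ((e x)⁻¹ * e y) := by rw [hk]; simp
      simpa [this, mul_assoc] using h2
  obtain ⟨X, mX, ι, h1, h2, h3⟩ := exists_realization hd
  refine ⟨X, mX, fun g => ι (e.symm g), h1, fun g h => ?_, fun x => ?_⟩
  · rw [h2]; simp [wordDist]
  · obtain ⟨v, hv⟩ := h3 x
    exact ⟨e v, by simpa using hv⟩

/-! ### Strongly quasiconvex subgroups are undistorted -/

theorem undistorted_of_stronglyQuasiconvex {G : Type*} [Group G] {T : Set G}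
    (hfin : T.Finite) (hT : Subgroup.closure T = ⊤) {B : Subgroup G}
    (hB : StronglyQuasiconvex B) : Undistorted T B := by
  obtain ⟨X, mX, ι, hgeo, hdist, hdense⟩ := exists_cayleyModel hfin hT
  obtain ⟨M, hM0, hM⟩ := hB T hfin hT X ι ⟨hgeo, hdist, hdense⟩ 1 0 le_rfl le_rfl
  obtain ⟨R, hR⟩ := exists_nat_ge (2 * M + 3)
  -- Consecutive approximations in `B` of points on a geodesic differ by at most `2(M+1)+1`.
  let F : Set B := {b | wordLength T (b : G) ≤ R}
  have hF : F.Finite := (finite_ball hfin hT R).preimage Subtype.val_injective.injOn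
  have key : ∀ b : B, ∃ w : List B, w.length = wordLength T (b : G) ∧ (∀ x ∈ w, x ∈ F) ∧
      w.prod = b := by
    intro b
    obtain ⟨γ, h0, h1, hγ⟩ := hgeo (ι 1) (ι b)
    set n := wordLength T (b : G) with hn
    have hD : dist (ι 1) (ι (b : G)) = n := by rw [hdist]; simp [wordDist, hn]
    rw [hD] at h1 hγ
    have near : ∀ i : ℕ, ∃ c : B, i ≤ n → dist (γ i) (ι (c : G)) < M + 1 := by
      intro i
      by_cases hi : i ≤ n
      · have hi' : (i : ℝ) ≤ n := by exact_mod_cast hi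
        have := hM γ 0 n (by positivity)
          (fun s hs t ht => by rw [hγ s hs t ht]; constructor <;> simp)
          ⟨1, B.one_mem, h0.symm⟩ ⟨b, b.2, h1.symm⟩ i ⟨by positivity, hi'⟩
        obtain ⟨y, ⟨c, hc, rfl⟩, hy⟩ :=
          (infDist_lt_iff (⟨ι 1, 1, B.one_mem, rfl⟩ : (ι '' (B : Set G)).Nonempty)).1
            (this.trans_lt (lt_add_one M))
        exact ⟨⟨c, hc⟩, fun _ => hy⟩
      · exact ⟨1, fun h => absurd h hi⟩
    choose c' hc' using near
    let c : ℕ → B := fun i => if i = 0 then 1 else if i = n then b else c' i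
    have hc : ∀ i ≤ n, dist (γ i) (ι (c i : G)) < M + 1 := by
      intro i hi
      by_cases hi0 : i = 0
      · simp only [c, hi0, if_true, Nat.cast_zero, h0]
        simpa using by linarith
      by_cases hin : i = n
      · have hn0 : n ≠ 0 := hin ▸ hi0
        simpa [c, hin, hn0, h1] using by linarith
      · simpa [c, hi0, hin] using hc' i hi
    have hc0 : c 0 = 1 := by simp [c]
    have hcn : c n = b := by
      by_cases h : n = 0
      · have hb : dist (ι 1) (ι (b : G)) = 0 := by rw [hD, h]; simp
        rw [hdist] at hb
        obtain ⟨w, hw, -, hw'⟩ := exists_word hT (b : G)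
        have : w = [] := List.length_eq_zero_iff.1 (by omega)
        have hb1 : b = 1 := Subtype.ext (by simp [← hw', this])
        rw [h, hc0, hb1]
      · simp [c, h]
    have step : ∀ i < n, (c i)⁻¹ * c (i + 1) ∈ F := by
      intro i hi
      have a1 := hc i hi.le
      have a2 := hc (i + 1) hi
      have hi' : (i : ℝ) + 1 ≤ n := by exact_mod_cast hi
      have a3 := hγ i ⟨by positivity, by linarith⟩ ((i + 1 : ℕ) : ℝ)
        ⟨by positivity, by push_cast; exact hi'⟩
      have a4 := dist_triangle4 (ι (c i : G)) (γ i) (γ ((i + 1 : ℕ) : ℝ)) (ι (c (i + 1) : G))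
      have a5 : |(i : ℝ) - ((i + 1 : ℕ) : ℝ)| = 1 := by push_cast; simp
      rw [dist_comm (ι (c i : G)) (γ i), a3, a5, hdist] at a4
      have a6 : wordDist T (c i : G) (c (i + 1) : G) ≤ R := by linarith
      unfold wordDist at a6
      change wordLength T (((c i)⁻¹ * c (i + 1) : B) : G) ≤ R
      push_cast
      exact_mod_cast a6
    have build : ∀ i ≤ n, ∃ w : List B, w.length = i ∧ (∀ x ∈ w, x ∈ F) ∧ w.prod = c i := by
      intro i
      induction i with
      | zero => exact fun _ => ⟨[], rfl, by simp, by simp [hc0]⟩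
      | succ i ih =>
        intro hi
        obtain ⟨w, h1, h2, h3⟩ := ih (by omega)
        refine ⟨w ++ [(c i)⁻¹ * c (i + 1)], by simp [h1], ?_, by simp [h3]⟩
        intro x hx
        rcases List.mem_append.1 hx with h | h
        · exact h2 x h
        · rw [List.mem_singleton.1 h]; exact step i hi
    obtain ⟨w, h1, h2, h3⟩ := build n le_rfl
    exact ⟨w, h1, h2, h3.trans hcn⟩
  have hFgen : Subgroup.closure F = ⊤ := by
    refine eq_top_iff.2 fun b _ => ?_
    obtain ⟨w, -, h, rfl⟩ := key b
    exact Subgroup.list_prod_mem _ fun x hx => Subgroup.subset_closure (h x hx)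
  have up : ∀ b : B, wordLength F b ≤ wordLength T (b : G) := by
    intro b
    obtain ⟨w, h1, h, h3⟩ := key b
    rw [← h1, ← h3]
    exact wordLength_prod_le w fun x hx => Or.inl (h x hx)
  have low : ∀ b : B, wordLength T (b : G) ≤ R * wordLength F b :=
    wordLength_map_le hFgen hT B.subtype R fun s hs => hs
  have hR1 : (1 : ℝ) ≤ R := by linarith
  refine ⟨F, hF, hFgen, R, 0, hR1, le_rfl, fun h₁ h₂ => ?_⟩
  have u : (wordLength F (h₁⁻¹ * h₂) : ℝ) ≤ wordLength T ((h₁ : G)⁻¹ * h₂) := by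
    exact_mod_cast up (h₁⁻¹ * h₂)
  have l : (wordLength T ((h₁ : G)⁻¹ * h₂) : ℝ) ≤ R * wordLength F (h₁⁻¹ * h₂) := by
    exact_mod_cast low (h₁⁻¹ * h₂)
  unfold wordDist
  constructor
  · have : 1 / (R : ℝ) ≤ 1 := by rw [div_le_one (by linarith)]; exact hR1
    have h0 : (0 : ℝ) ≤ wordLength F (h₁⁻¹ * h₂) := by positivity
    nlinarith
  · linarith

/-! ### Intersecting with an undistorted subgroup -/

/-- Elements of `A` that are close to `H` are close to `H ∩ A`. For each of the finitely many
short `u` fix one solution `(a', h')` of `a' u = h'`; any other solution `a u = h` satisfies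
`a a'⁻¹ = h h'⁻¹ ∈ H ∩ A`, and `a'` comes from a finite set. -/
theorem exists_near_inter {G : Type*} [Group G] {S : Set G} (hfin : S.Finite)
    (hS : Subgroup.closure S = ⊤) (A H : Subgroup G) (T : Set A)
    (hT : Subgroup.closure T = ⊤) (m : ℕ) :
    ∃ N : ℕ, ∀ a : A, ∀ h ∈ H, wordLength S ((a : G)⁻¹ * h) ≤ m →
      ∃ b ∈ (H ⊓ A).subgroupOf A, wordLength T (a⁻¹ * b) ≤ N := by
  have : ∀ u : G, ∃ a' : A, ∀ a : A, (a : G) * u ∈ H → (a' : G) * u ∈ H := by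
    intro u
    by_cases h : ∃ a : A, (a : G) * u ∈ H
    · exact ⟨h.choose, fun _ _ => h.choose_spec⟩
    · exact ⟨1, fun a ha => absurd ⟨a, ha⟩ h⟩
  choose f hf using this
  obtain ⟨N, hN⟩ := ((finite_ball hfin hS m).image fun u => wordLength T (f u)).bddAbove
  refine ⟨N, fun a h hh hm => ?_⟩
  have h1 := hf ((a : G)⁻¹ * h) a (by simpa using hh)
  refine ⟨a * (f ((a : G)⁻¹ * h))⁻¹, ?_, ?_⟩
  · rw [Subgroup.mem_subgroupOf]
    refine ⟨?_, SetLike.coe_mem _⟩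
    have := H.mul_mem hh (H.inv_mem h1)
    simpa [mul_assoc] using this
  · rw [inv_mul_cancel_left, wordLength_inv hT]
    exact hN ⟨_, hm, rfl⟩

theorem stronglyQuasiconvex_inter {G : Type*} [Group G] (S : Set G) (hS : S.Finite)
    (hgen : Subgroup.closure S = ⊤) (A : Subgroup G) (hA : Undistorted S A)
    (H : Subgroup G) (hH : StronglyQuasiconvex H) :
    StronglyQuasiconvex ((H ⊓ A).subgroupOf A) := by
  intro T hT hTgen Y mY κ hY K C hK hC
  obtain ⟨-, hκ, hdense⟩ := hY
  obtain ⟨X, mX, ι, hX⟩ := exists_cayleyModel hS hgen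
  have hι := hX.2.1
  obtain ⟨P, hP, Q, hQ, hle, hge⟩ : ∃ P : ℝ, 1 ≤ P ∧ ∃ Q : ℝ, 0 ≤ Q ∧
      (∀ x y : A, wordDist T x y ≤ P * wordDist S (x : G) y + Q) ∧
      ∀ x y : A, wordDist S (x : G) y ≤ P * wordDist T x y := by
    obtain ⟨T₀, hT₀, hT₀gen, K₀, L₀, hK₀, hL₀, h⟩ := hA
    obtain ⟨K₁, hK₁, h₁⟩ := exists_wordDist_map_le hT₀ hT₀gen hTgen (MonoidHom.id A)
    obtain ⟨K₂, hK₂, h₂⟩ := exists_wordDist_map_le hT hTgen hgen A.subtype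
    have hnn : (0 : ℝ) ≤ K₁ * K₀ := by positivity
    refine ⟨1 + K₁ * K₀ + K₂, by linarith, K₁ * K₀ * L₀, by positivity, fun x y => ?_,
      fun x y => ?_⟩
    · have a1 : wordDist T x y ≤ K₁ * wordDist T₀ x y := h₁ x y
      have a2 := (h x y).1
      have a3 : wordDist T₀ x y ≤ K₀ * (wordDist S (x : G) y + L₀) := by
        rw [one_div, inv_mul_eq_div, sub_le_iff_le_add, div_le_iff₀ (by linarith)] at a2
        linarith
      have a4 : (0 : ℝ) ≤ wordDist S (x : G) y := Nat.cast_nonneg _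
      have a5 := mul_le_mul_of_nonneg_left a3 hK₁
      nlinarith
    · have a1 : wordDist S (x : G) y ≤ K₂ * wordDist T x y := h₂ x y
      have a4 : (0 : ℝ) ≤ wordDist T x y := Nat.cast_nonneg _
      nlinarith
  obtain ⟨M, hM0, hM⟩ := hH S hS hgen X ι hX (K * P) (P * (C + 1) + Q)
    (by nlinarith) (by positivity)
  obtain ⟨m, hm⟩ := exists_nat_ge (M + 1)
  obtain ⟨N, hN⟩ := exists_near_inter hS hgen A H T hTgen m
  refine ⟨1 / 2 + N, by positivity, fun γ a b hab hγ ha hb t ht => ?_⟩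
  obtain ⟨ga, hga, ega⟩ := ha
  obtain ⟨gb, hgb, egb⟩ := hb
  -- Push the path to `G` through nearby vertices, keeping its end points in `H`.
  have hα : ∀ s, ∃ g : A, dist (γ s) (κ g) ≤ 1 / 2 ∧
      ((s = a ∨ s = b) → g ∈ (H ⊓ A).subgroupOf A) := by
    intro s
    by_cases hsa : s = a
    · exact ⟨ga, by rw [hsa, ega, dist_self]; norm_num, fun _ => hga⟩
    by_cases hsb : s = b
    · exact ⟨gb, by rw [hsb, egb, dist_self]; norm_num, fun _ => hgb⟩
    · obtain ⟨g, hg⟩ := hdense (γ s)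
      exact ⟨g, hg, fun h => absurd h (by tauto)⟩
  choose α hα1 hα2 using hα
  have hH' : ∀ s, (s = a ∨ s = b) → ι (α s : G) ∈ ι '' (H : Set G) := fun s hs =>
    ⟨_, (Subgroup.mem_subgroupOf.1 (hα2 s hs)).1, rfl⟩
  have hq : QIEmbedOn (fun s => ι (α s : G)) (Icc a b) (K * P) (P * (C + 1) + Q) := by
    intro s hs u hu
    obtain ⟨l1, l2⟩ := hγ s hs u hu
    have b1 := dist_triangle4 (γ s) (κ (α s)) (κ (α u)) (γ u)
    have b2 := dist_triangle4 (κ (α s)) (γ s) (γ u) (κ (α u))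
    rw [dist_comm (κ (α u))] at b1
    rw [dist_comm (κ (α s)) (γ s)] at b2
    rw [hκ] at b1 b2
    have c1 := hα1 s
    have c2 := hα1 u
    have d1 := hle (α s) (α u)
    have d2 := hge (α s) (α u)
    simp only [hι]
    constructor
    · have e1 : 1 / K * |s - u| ≤ P * (wordDist S (α s : G) (α u) + (P * (C + 1) + Q)) := by
        have : C + 1 + Q ≤ P * (P * (C + 1) + Q) := by nlinarith [mul_nonneg (sub_nonneg.2 hP) hC]
        nlinarith
      have e2 : 1 / (K * P) * |s - u| = (1 / K * |s - u|) / P := by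
        field_simp
      rw [e2, sub_le_iff_le_add, div_le_iff₀ (by linarith)]
      linarith
    · have : P * wordDist T (α s) (α u) ≤ P * (K * |s - u| + C + 1) :=
        mul_le_mul_of_nonneg_left (by linarith) (by linarith)
      nlinarith
  have h1 := hM _ a b hab hq (hH' a (Or.inl rfl)) (hH' b (Or.inr rfl)) t ht
  obtain ⟨y, ⟨h, hh, rfl⟩, hy⟩ :=
    (infDist_lt_iff (⟨ι 1, 1, H.one_mem, rfl⟩ : (ι '' (H : Set G)).Nonempty)).1
      (h1.trans_lt (lt_add_one M))
  rw [hι] at hy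
  obtain ⟨c, hc, hcN⟩ := hN (α t) h hh (by
    have := hy.le.trans hm
    unfold wordDist at this
    exact_mod_cast this)
  have hcN' : dist (κ (α t)) (κ c) ≤ N := by
    rw [hκ]; unfold wordDist; exact_mod_cast hcN
  calc infDist (γ t) (κ '' _) ≤ dist (γ t) (κ c) := infDist_le_dist_of_mem ⟨c, hc, rfl⟩
    _ ≤ dist (γ t) (κ (α t)) + dist (κ (α t)) (κ c) := dist_triangle _ _ _
    _ ≤ 1 / 2 + N := add_le_add (hα1 t) hcN'

/-- If `A` is a finitely generated undistorted subgroup of a finitely generated group `G`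
and `H` is strongly quasiconvex in `G`, then `H ∩ A` is strongly quasiconvex in `A`;
in particular, `H ∩ A` is finitely generated and undistorted in `A`. -/
theorem inter_undistorted_stronglyQuasiconvex
    {G : Type*} [Group G] (S : Set G) (hS : S.Finite) (hgen : Subgroup.closure S = ⊤)
    (A : Subgroup G) (hA : Undistorted S A)
    (H : Subgroup G) (hH : StronglyQuasiconvex H) :
    StronglyQuasiconvex ((H ⊓ A).subgroupOf A) ∧
    ((H ⊓ A).subgroupOf A).FG ∧
    (∀ T : Set A, T.Finite → Subgroup.closure T = ⊤ →
      Undistorted T ((H ⊓ A).subgroupOf A)) := by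
  have h := stronglyQuasiconvex_inter S hS hgen A hA H hH
  refine ⟨h, ?_, fun T hT hTgen => undistorted_of_stronglyQuasiconvex hT hTgen h⟩
  obtain ⟨T₀, hT₀, hT₀gen, -⟩ := hA
  obtain ⟨F, hF, hFgen, -⟩ := undistorted_of_stronglyQuasiconvex hT₀ hT₀gen h
  exact (Group.fg_iff_subgroup_fg _).1 (Group.fg_iff.2 ⟨F, hFgen, hF⟩)
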